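/- For every positive integer b and every positive integer j, F(b,j+1) ≤ (1/2) · F(b,j); that is, \(b^2 \binom{(j+3)b-2}{b-1} (1/2)^{(j+3)b-1} \le \tfrac{1}{2}\, b^2 \binom{(j+2)b-2}{b-1} (1/2)^{(j+2)b-1}\). -/

import Mathlib

/-- `F b j = b² · C((j+2)b − 2, b − 1) · (1/2)^((j+2)b − 1)`, the bound on the
expected number of holes in region `j` for local-buffer size `b`. -/
noncomputable def F (b j : ℕ) : ℝ :=
  (b : ℝ) ^ 2 * (Nat.choose ((j + 2) * b - 2) (b - 1) : ℝ) * (1 / 2) ^ ((j + 2) * b - 1)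

/-!
Write `b = k + 1` and `n = (j + 2) * b - 2`, so that `n ≥ 2 * k`. Raising `j` by one replaces
`C(n, k)` by `C(n + k + 1, k)`. For `i < k` we have `n + k + 1 - i ≤ 2 * (n - i)`, so each of the
`k` factors in the numerator of the binomial coefficient at most doubles. The power of `1/2` gains
`k + 1` factors: `k` of them absorb the doublings and the last one is the claimed factor `1/2`.
-/

theorem descFactorial_le_pow_mul_descFactorial {m n k q : ℕ}
    (h : ∀ i < k, m - i ≤ q * (n - i)) :
    m.descFactorial k ≤ q ^ k * n.descFactorial k := by
  calc m.descFactorial k = ∏ i ∈ Finset.range k, (m - i) := Nat.descFactorial_eq_prod_range m k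
    _ ≤ ∏ i ∈ Finset.range k, q * (n - i) :=
      Finset.prod_le_prod' fun i hi => h i (Finset.mem_range.mp hi)
    _ = q ^ k * n.descFactorial k := by
      rw [Finset.prod_mul_distrib, Finset.prod_const, Finset.card_range,
        Nat.descFactorial_eq_prod_range]

theorem choose_le_pow_mul_choose {m n k q : ℕ} (h : ∀ i < k, m - i ≤ q * (n - i)) :
    m.choose k ≤ q ^ k * n.choose k := by
  refine Nat.le_of_mul_le_mul_left ?_ k.factorial_pos
  calc k.factorial * m.choose k = m.descFactorial k :=
        (Nat.descFactorial_eq_factorial_mul_choose m k).symm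
    _ ≤ q ^ k * n.descFactorial k := descFactorial_le_pow_mul_descFactorial h
    _ = k.factorial * (q ^ k * n.choose k) := by
      rw [Nat.descFactorial_eq_factorial_mul_choose, mul_left_comm]

theorem choose_add_le_two_pow_mul_choose {n k a : ℕ} (h : k + a ≤ n + 1) :
    (n + a).choose k ≤ 2 ^ k * n.choose k :=
  choose_le_pow_mul_choose fun i hi => by omega

theorem choose_add_mul_half_pow_le_choose {n k a : ℕ} (h : k + a ≤ n + 1) :
    ((n + a).choose k : ℝ) * (1 / 2) ^ k ≤ n.choose k := by
  have choose_le : ((n + a).choose k : ℝ) ≤ 2 ^ k * n.choose k :=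
    mod_cast choose_add_le_two_pow_mul_choose h
  rwa [one_div, inv_pow, ← div_eq_mul_inv, div_le_iff₀' (by positivity)]

theorem F_succ_left (k j : ℕ) :
    F (k + 1) j = ((k + 1 : ℕ) : ℝ) ^ 2 * (j * (k + 1) + 2 * k).choose k *
      (1 / 2) ^ (j * (k + 1) + 2 * k + 1) := by
  have index_eq : (j + 2) * (k + 1) = j * (k + 1) + 2 * k + 2 := by ring
  simp only [F, index_eq, Nat.add_sub_cancel, Nat.add_succ_sub_one]

theorem F_succ_le_half :
    ∀ b j : ℕ, 0 < b → 0 < j → F b (j + 1) ≤ (1 / 2) * F b j := by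
  intro b j hb _
  obtain ⟨k, rfl⟩ := Nat.exists_eq_succ_of_ne_zero hb.ne'
  let n := j * (k + 1) + 2 * k
  have index_succ : (j + 1) * (k + 1) + 2 * k = n + (k + 1) := by
    simp only [n]
    ring
  have choose_bound : ((n + (k + 1)).choose k : ℝ) * (1 / 2) ^ k ≤ n.choose k :=
    choose_add_mul_half_pow_le_choose (by omega)
  calc F (k + 1) (j + 1)
      = ((k + 1 : ℕ) : ℝ) ^ 2 * (n + (k + 1)).choose k * (1 / 2) ^ (n + (k + 1) + 1) := by
        rw [F_succ_left, index_succ]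
    _ = ((k + 1 : ℕ) : ℝ) ^ 2 * ((n + (k + 1)).choose k * (1 / 2) ^ k) * (1 / 2) ^ (n + 2) := by
        ring
    _ ≤ ((k + 1 : ℕ) : ℝ) ^ 2 * n.choose k * (1 / 2) ^ (n + 2) := by gcongr
    _ = (1 / 2) * F (k + 1) j := by
        rw [F_succ_left]
        ring
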